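/- arXiv:1806.07800 — 4 statements merged into one kernel-verified Lean document; each statement's English description precedes it below -/
import Mathlib

section
/- Let K and K1 be natural numbers with K1 ≤ K, and let σ be a permutation of {1,...,K1}. Consider the directed graph whose vertices are pairs (i, T) with i ∈ {1,...,K} and T ⊆ {1,...,K1}, subject to the constraint that i ∉ T whenever i ≤ K1, and with a directed edge from (i, T) to (i', T') if and only if i' ∈ T. Let S be the set of vertices consisting of (a) all pairs (σ(j), T) with j ∈ {1,...,K1} and T ⊆ {1,...,K1} \ {σ(1), σ(2), ..., σ(j)}, together with (b) all pairs (i, T) with K1 < i ≤ K and T ⊆ {1,...,K1}. Then the subgraph induced on S is acyclic; that is, there is no vertex v ∈ S such that the transitive closure of the edge relation restricted to S relates v to itself. -/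
/-- Lemma 1: the side-information graph restricted to the acyclic vertex set
`J_{d,σ}` enlarged by all subfiles requested by the cache-less users remains
acyclic. Vertices are pairs `(i, T)` with `i ∈ {1,…,K}`, `T ⊆ {1,…,K1}` and
`i ∉ T` whenever `i ≤ K1`; there is an edge from `(i, T)` to `(i', T')` iff
`i' ∈ T`. -/
theorem stmt_0 (K K1 : ℕ) (hK1 : K1 ≤ K) (σ : ℕ → ℕ)
    (hσ : Set.BijOn σ (Set.Icc 1 K1) (Set.Icc 1 K1)) :
    ∀ v : ℕ × Finset ℕ,
      -- v is a vertex of the side-information graph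
      (v.1 ∈ Finset.Icc 1 K ∧ v.2 ⊆ Finset.Icc 1 K1 ∧ (v.1 ≤ K1 → v.1 ∉ v.2)) →
      -- v belongs to the enlarged set S = J_{d,σ} ∪ A_d
      ((∃ j ∈ Finset.Icc 1 K1, v.1 = σ j ∧
          v.2 ⊆ Finset.Icc 1 K1 \ Finset.image σ (Finset.Icc 1 j)) ∨ K1 < v.1) →
      -- then no cycle through v in the subgraph induced on S
      ¬ Relation.TransGen
          (fun a b : ℕ × Finset ℕ =>
            (a.1 ∈ Finset.Icc 1 K ∧ a.2 ⊆ Finset.Icc 1 K1 ∧ (a.1 ≤ K1 → a.1 ∉ a.2)) ∧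
            ((∃ j ∈ Finset.Icc 1 K1, a.1 = σ j ∧
                a.2 ⊆ Finset.Icc 1 K1 \ Finset.image σ (Finset.Icc 1 j)) ∨ K1 < a.1) ∧
            (b.1 ∈ Finset.Icc 1 K ∧ b.2 ⊆ Finset.Icc 1 K1 ∧ (b.1 ≤ K1 → b.1 ∉ b.2)) ∧
            ((∃ j ∈ Finset.Icc 1 K1, b.1 = σ j ∧
                b.2 ⊆ Finset.Icc 1 K1 \ Finset.image σ (Finset.Icc 1 j)) ∨ K1 < b.1) ∧
            b.1 ∈ a.2)
          v v := by
  intro v _ _ h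
  have hg := hσ.injOn.leftInvOn_invFunOn
  generalize Function.invFunOn σ (Set.Icc 1 K1) = g at hg
  let f : ℕ × Finset ℕ → ℕ := fun a => if K1 < a.1 then 0 else g a.1
  have key : f v < f v := by
    refine Relation.TransGen.trans_induction_on
      (motive := fun {a b} _ => f a < f b) h ?_ ?_
    · rintro a b ⟨⟨_, haT, _⟩, ha, _, hb, hba⟩
      have hbK := (Finset.mem_Icc.1 (haT hba)).2
      rcases hb with ⟨j', hj', hbj, _⟩ | hb
      · have hj'' := Finset.mem_Icc.1 hj'
        have hfb : f b = j' := by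
          have h1 : ¬ K1 < b.1 := by omega
          simp only [f, if_neg h1]
          rw [hbj]
          exact hg (Set.mem_Icc.2 hj'')
        rw [hfb]
        rcases ha with ⟨j, hj, haj, hsub⟩ | ha
        · have hjI := Finset.mem_Icc.1 hj
          have h2 := (Set.mem_Icc.1 (hσ.mapsTo (Set.mem_Icc.2 hjI))).2
          have hfa : f a = j := by
            have h1 : ¬ K1 < a.1 := by omega
            simp only [f, if_neg h1]
            rw [haj]
            exact hg (Set.mem_Icc.2 hjI)
          rw [hfa]
          by_contra hlt
          have h3 := (Finset.mem_sdiff.1 (hsub hba)).2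
          apply h3
          rw [hbj]
          exact Finset.mem_image_of_mem σ (Finset.mem_Icc.2 ⟨hj''.1, by omega⟩)
        · simp only [f, if_pos ha]
          omega
      · omega
    · intro a b c _ _ h1 h2
      exact lt_trans h1 h2
  exact lt_irrefl _ key
end

section
/- Let K1 > 0 and γ1 ∈ (0,1) be real numbers, let L̃ > 1 and let L be a real number with 0 < L ≤ L̃. Define the single-antenna delay T_{K1} := K1(1 − γ1)/(1 + K1γ1) and set K2 := (L̃ − 1)·T_{K1}. Then for every real l with 0 < l < L, max{ K1(1 − γ1)/(l·(1 + K1γ1)) , K2/(L − l) } ≥ T_{K1}·L̃/L, and equality holds at l = L/L̃. Hence the minimum over l ∈ (0, L) of max{ K1(1 − γ1)/(l·(1 + K1γ1)) , K2/(L − l) } equals T_{K1}·L̃/L. -/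
/-- Optimization of Eq. (46), converse of Theorem 3: with
`T = K1(1−γ1)/(1+K1γ1)` and `K2 = (L̃−1)T`, for every `l ∈ (0, L)`,
`max{K1(1−γ1)/(l(1+K1γ1)), K2/(L−l)} ≥ T·L̃/L`, with equality at `l = L/L̃`;
hence the minimum over `(0, L)` equals `T·L̃/L`. -/
theorem stmt_5 (K1 γ1 Lt L : ℝ) (hK1 : 0 < K1) (hγ1 : γ1 ∈ Set.Ioo (0 : ℝ) 1)
    (hLt : 1 < Lt) (hL0 : 0 < L) (hLLt : L ≤ Lt) :
    (∀ l : ℝ, 0 < l → l < L →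
      (K1 * (1 - γ1) / (1 + K1 * γ1)) * Lt / L ≤
        max (K1 * (1 - γ1) / (l * (1 + K1 * γ1)))
          (((Lt - 1) * (K1 * (1 - γ1) / (1 + K1 * γ1))) / (L - l))) ∧
    max (K1 * (1 - γ1) / ((L / Lt) * (1 + K1 * γ1)))
        (((Lt - 1) * (K1 * (1 - γ1) / (1 + K1 * γ1))) / (L - L / Lt)) =
      (K1 * (1 - γ1) / (1 + K1 * γ1)) * Lt / L ∧
    IsLeast
      ((fun l : ℝ => max (K1 * (1 - γ1) / (l * (1 + K1 * γ1)))
          (((Lt - 1) * (K1 * (1 - γ1) / (1 + K1 * γ1))) / (L - l))) ''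
        Set.Ioo 0 L)
      ((K1 * (1 - γ1) / (1 + K1 * γ1)) * Lt / L) := by
  obtain ⟨hγ0, hγ⟩ := hγ1
  have hden : 0 < 1 + K1 * γ1 := by positivity
  have hT : 0 < K1 * (1 - γ1) / (1 + K1 * γ1) :=
    div_pos (mul_pos hK1 (by linarith)) hden
  have hdiv : ∀ l : ℝ, K1 * (1 - γ1) / (l * (1 + K1 * γ1)) =
      (K1 * (1 - γ1) / (1 + K1 * γ1)) / l := by
    intro l
    rw [div_div, mul_comm l]
  simp only [hdiv]
  generalize K1 * (1 - γ1) / (1 + K1 * γ1) = T at hT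
  have hLt0 : 0 < Lt := by linarith
  have h1 : ∀ l : ℝ, 0 < l → l < L →
      T * Lt / L ≤ max (T / l) (((Lt - 1) * T) / (L - l)) := by
    intro l hl hlL
    rcases le_total (Lt * l) L with h | h
    · apply le_max_of_le_left
      rw [div_le_div_iff₀ hL0 hl]
      nlinarith [mul_le_mul_of_nonneg_left h hT.le]
    · apply le_max_of_le_right
      rw [div_le_div_iff₀ hL0 (by linarith)]
      nlinarith [mul_le_mul_of_nonneg_left h hT.le]
  have h2 : max (T / (L / Lt)) (((Lt - 1) * T) / (L - L / Lt)) = T * Lt / L := by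
    have hne : Lt - 1 ≠ 0 := by linarith
    have e : L - L / Lt = L * (Lt - 1) / Lt := by field_simp
    have e1 : T / (L / Lt) = T * Lt / L := by field_simp
    have e2 : ((Lt - 1) * T) / (L - L / Lt) = T * Lt / L := by
      rw [e]
      field_simp
    rw [e1, e2, max_self]
  refine ⟨h1, h2, ⟨L / Lt, ⟨by positivity, div_lt_self hL0 hLt⟩, h2⟩, ?_⟩
  rintro _ ⟨l, ⟨hl, hlL⟩, rfl⟩
  exact h1 l hl hlL
end

section
/- Let K1 > 0 and γ1 ∈ (0,1) be real numbers, let L ≥ 2 be real, and let K2 ≥ L be a real number with γ1 ≥ L/K2. Define the single-antenna delay T_{K1} := K1(1 − γ1)/(1 + K1γ1). Then (L − 1)·T_{K1} ≤ K2, and T_{K1} + (K2 − (L − 1)·T_{K1})/L ≤ K2/(L − 1). -/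
/-- Corollary 3: with `K2 ≥ L` cache-less users and `γ1 ≥ L/K2`, setting
`T = K1(1−γ1)/(1+K1γ1)`, one has `(L−1)T ≤ K2` and the achievable delay
`T + (K2 − (L−1)T)/L` is at most `K2/(L−1)`. -/
theorem stmt_8 (K1 γ1 L K2 : ℝ) (hK1 : 0 < K1) (hγ1 : γ1 ∈ Set.Ioo (0 : ℝ) 1)
    (hL : 2 ≤ L) (hK2 : L ≤ K2) (hγL : L / K2 ≤ γ1) :
    (L - 1) * (K1 * (1 - γ1) / (1 + K1 * γ1)) ≤ K2 ∧
    K1 * (1 - γ1) / (1 + K1 * γ1) +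
        (K2 - (L - 1) * (K1 * (1 - γ1) / (1 + K1 * γ1))) / L ≤
      K2 / (L - 1) := by
  obtain ⟨h0, h1⟩ := hγ1
  have hK2p : 0 < K2 := by linarith
  have hLγ : L ≤ γ1 * K2 := (div_le_iff₀ hK2p).mp hγL
  have hd : 0 < 1 + K1 * γ1 := by positivity
  have hT0 : 0 ≤ K1 * (1 - γ1) / (1 + K1 * γ1) :=
    div_nonneg (mul_nonneg hK1.le (by linarith)) hd.le
  have hT : K1 * (1 - γ1) / (1 + K1 * γ1) ≤ K2 / L := by
    rw [div_le_div_iff₀ hd (by linarith)]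
    have a : K1 * L ≤ K1 * (γ1 * K2) := mul_le_mul_of_nonneg_left hLγ hK1.le
    have b : 0 ≤ K1 * γ1 * L := by positivity
    linarith
  generalize K1 * (1 - γ1) / (1 + K1 * γ1) = T at *
  rw [le_div_iff₀ (by linarith)] at hT
  have h : (L - 1) * T ≤ K2 := by linarith
  refine ⟨h, ?_⟩
  have e : T + (K2 - (L - 1) * T) / L = (T + K2) / L := by
    have : L ≠ 0 := by linarith
    field_simp
    ring
  rw [e, div_le_div_iff₀ (by linarith) (by linarith)]
  linarith
end

section
/- Let K1, K2 be positive real numbers, let L > 1 be real, and let γ1 ∈ (0,1) and γ2 ∈ [0, γ1) be real numbers satisfying K1(1 − γ1)/(1 + K1γ1) ≥ K2(1 − γ2)/(L − 1 + K2γ2). Then there exist real numbers L1 and L2 with L1 ≥ 1, L2 ≥ 0, and L1 + L2 = L, such that K1(1 − γ1)/(L1 + K1γ1) = K2(1 − γ2)/(L2 + K2γ2) = (K1(1 − γ1) + K2(1 − γ2))/(L + K1γ1 + K2γ2). -/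
/-- Stream-allocation equation (Eq. (16)) underlying Theorem 4: there is a
split `L = L1 + L2` with `L1 ≥ 1`, `L2 ≥ 0` equalizing the two per-group
delays, whose common value is the homogeneous delay of Eq. (12). -/
theorem stmt_10 (K1 K2 L γ1 γ2 : ℝ) (hK1 : 0 < K1) (hK2 : 0 < K2) (hL : 1 < L)
    (hγ1 : γ1 ∈ Set.Ioo (0 : ℝ) 1) (hγ2 : γ2 ∈ Set.Ico (0 : ℝ) γ1)
    (hcond : K2 * (1 - γ2) / (L - 1 + K2 * γ2) ≤ K1 * (1 - γ1) / (1 + K1 * γ1)) :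
    ∃ L1 L2 : ℝ, 1 ≤ L1 ∧ 0 ≤ L2 ∧ L1 + L2 = L ∧
      K1 * (1 - γ1) / (L1 + K1 * γ1) = K2 * (1 - γ2) / (L2 + K2 * γ2) ∧
      K2 * (1 - γ2) / (L2 + K2 * γ2) =
        (K1 * (1 - γ1) + K2 * (1 - γ2)) / (L + K1 * γ1 + K2 * γ2) := by
  obtain ⟨h1, h1'⟩ := hγ1
  obtain ⟨h2, h2'⟩ := hγ2
  have ha : 0 < K1 * (1 - γ1) := mul_pos hK1 (by linarith)
  have hb : 0 < K2 * (1 - γ2) := mul_pos hK2 (by linarith)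
  have hc : 0 < K1 * γ1 := mul_pos hK1 h1
  have hd : 0 ≤ K2 * γ2 := mul_nonneg hK2.le h2
  have hkey : K1 * (1 - γ1) * (K2 * γ2) ≤ K2 * (1 - γ2) * (L + K1 * γ1) := by
    have e1 : 0 ≤ K1 * K2 * (γ1 - γ2) :=
      mul_nonneg (mul_pos hK1 hK2).le (by linarith)
    have e2 : 0 < K2 * (1 - γ2) * L := mul_pos hb (by linarith)
    nlinarith
  rw [div_le_div_iff₀ (by linarith) (by linarith)] at hcond
  generalize K1 * (1 - γ1) = a at *
  generalize K2 * (1 - γ2) = b at *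
  generalize K1 * γ1 = c at *
  generalize K2 * γ2 = d at *
  have hS : 0 < a + b := by linarith
  have hD : 0 < L + c + d := by linarith
  refine ⟨a * (L + c + d) / (a + b) - c, b * (L + c + d) / (a + b) - d, ?_, ?_, ?_, ?_, ?_⟩
  · rw [le_sub_iff_add_le, le_div_iff₀ hS]
    nlinarith
  · rw [sub_nonneg, le_div_iff₀ hS]
    nlinarith
  · field_simp
    ring
  · rw [sub_add_cancel, sub_add_cancel]
    field_simp
  · rw [sub_add_cancel]
    field_simp
end
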